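/- Let m be a positive integer, let γ ≥ 0, and let n₁,…,n_m, n, β̄ be positive real numbers. Define ω*_i = n_i^{-(γ+1)/4} / √( (∑_{i'=1}^m n_{i'}^{(1-γ)/2}) / (n β̄) ) for each i. Then: (i) ∑_{i=1}^m (n_i/n) (ω*_i)² = β̄; and (ii) for every vector ω ∈ ℝ^m with ω_i > 0 for all i and ∑_{i=1}^m (n_i/n) ω_i² ≤ β̄, one has ∑_{i=1}^m 1/(ω_i² n_i^γ) ≥ ∑_{i=1}^m 1/((ω*_i)² n_i^γ) = (∑_{i=1}^m n_i^{(1-γ)/2})² / (n β̄). In other words, ω* is the exact minimizer of the weighted excess-risk objective ∑_i 1/(ω_i² n_i^γ) under the average budget constraint ∑_i (n_i/n) ω_i² ≤ β̄, with optimal value (∑_i n_i^{(1-γ)/2})²/(n β̄). -/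

import Mathlib

/-- Closed-form solution of the budget-allocation problem (eq. (8) of the paper):
the weights `ωs i = n i ^ (-(γ+1)/4) / √((∑ i', n i' ^ ((1-γ)/2)) / (N * β̄))`
saturate the average budget constraint, and minimize `∑ i, 1/(ω i ² * n i ^ γ)` among all
positive weight vectors satisfying `∑ i, (n i / N) * ω i ² ≤ β̄`, with optimal value
`(∑ i, n i ^ ((1-γ)/2))² / (N * β̄)`. -/
theorem stmt3 (m : ℕ) (hm : 1 ≤ m) (γ : ℝ) (hγ : 0 ≤ γ)
    (n : Fin m → ℝ) (hn : ∀ i, 0 < n i) (N βbar : ℝ) (hN : 0 < N) (hβ : 0 < βbar) :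
    let ωs : Fin m → ℝ := fun i =>
      n i ^ (-(γ + 1) / 4) / Real.sqrt ((∑ i', n i' ^ ((1 - γ) / 2)) / (N * βbar))
    (∑ i, (n i / N) * ωs i ^ 2 = βbar) ∧
    (∀ ω : Fin m → ℝ, (∀ i, 0 < ω i) → (∑ i, (n i / N) * ω i ^ 2 ≤ βbar) →
      (∑ i, 1 / (ωs i ^ 2 * n i ^ γ)) ≤ ∑ i, 1 / (ω i ^ 2 * n i ^ γ)) ∧
    (∑ i, 1 / (ωs i ^ 2 * n i ^ γ)) = (∑ i, n i ^ ((1 - γ) / 2)) ^ 2 / (N * βbar) := by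
  intro ωs
  have hM : 0 < N * βbar := mul_pos hN hβ
  have ha : ∀ i, 0 < n i ^ ((1 - γ) / 2) := fun i => Real.rpow_pos_of_pos (hn i) _
  have hS : 0 < ∑ i', n i' ^ ((1 - γ) / 2) :=
    Finset.sum_pos (fun i _ => ha i) ⟨⟨0, hm⟩, Finset.mem_univ _⟩
  have hsq : ∀ i, ωs i ^ 2 = n i ^ (-(γ + 1) / 2) * (N * βbar) /
      (∑ i', n i' ^ ((1 - γ) / 2)) := by
    intro i
    have h1 : (n i ^ (-(γ + 1) / 4)) ^ 2 = n i ^ (-(γ + 1) / 2) := by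
      rw [← Real.rpow_natCast, ← Real.rpow_mul (hn i).le]
      congr 1
      push_cast
      ring
    simp only [ωs]
    rw [div_pow, Real.sq_sqrt (div_pos hS hM).le, h1]
    field_simp
  have hb : ∀ i, 0 < n i ^ (-(γ + 1) / 2) := fun i => Real.rpow_pos_of_pos (hn i) _
  have hg : ∀ i, 0 < n i ^ γ := fun i => Real.rpow_pos_of_pos (hn i) _
  have h1 : ∀ i, n i * n i ^ (-(γ + 1) / 2) = n i ^ ((1 - γ) / 2) := by
    intro i
    have h := Real.rpow_add (hn i) 1 (-(γ + 1) / 2)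
    rw [Real.rpow_one] at h
    rw [← h]
    congr 1
    ring
  have h2 : ∀ i, n i ^ (-(γ + 1) / 2) * n i ^ γ * n i ^ ((1 - γ) / 2) = 1 := by
    intro i
    rw [← Real.rpow_add (hn i), ← Real.rpow_add (hn i)]
    rw [show -(γ + 1) / 2 + γ + (1 - γ) / 2 = 0 by ring, Real.rpow_zero]
  have h3 : ∀ i, n i ^ γ * (n i ^ ((1 - γ) / 2)) ^ 2 = n i := by
    intro i
    calc _ = (n i * n i ^ (-(γ + 1) / 2)) * n i ^ γ * n i ^ ((1 - γ) / 2) := by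
            rw [h1]; ring
      _ = n i * (n i ^ (-(γ + 1) / 2) * n i ^ γ * n i ^ ((1 - γ) / 2)) := by ring
      _ = n i := by rw [h2, mul_one]
  have hval : (∑ i, 1 / (ωs i ^ 2 * n i ^ γ)) =
      (∑ i, n i ^ ((1 - γ) / 2)) ^ 2 / (N * βbar) := by
    have : ∀ i, 1 / (ωs i ^ 2 * n i ^ γ) =
        n i ^ ((1 - γ) / 2) * ((∑ i, n i ^ ((1 - γ) / 2)) / (N * βbar)) := by
      intro i
      have hbi := hb i
      have hgi := hg i
      have h2i := h2 i
      rw [hsq]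
      generalize (∑ i', n i' ^ ((1 - γ) / 2)) = S at *
      generalize n i ^ (-(γ + 1) / 2) = b at *
      generalize n i ^ γ = g at *
      generalize n i ^ ((1 - γ) / 2) = a at *
      field_simp
      linarith
    rw [Finset.sum_congr rfl (fun i _ => this i), ← Finset.sum_mul]
    ring
  refine ⟨?_, ?_, hval⟩
  · have : ∀ i, n i / N * ωs i ^ 2 =
        n i ^ ((1 - γ) / 2) * (βbar / (∑ i, n i ^ ((1 - γ) / 2))) := by
      intro i
      rw [hsq, ← h1 i]
      generalize (∑ i', n i' ^ ((1 - γ) / 2)) = S at *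
      field_simp
    rw [Finset.sum_congr rfl (fun i _ => this i), ← Finset.sum_mul]
    field_simp
  · intro ω hω hc
    rw [hval, div_le_iff₀ hM]
    have hcs : (∑ i, n i ^ ((1 - γ) / 2)) ^ 2 ≤
        (∑ i, 1 / (ω i ^ 2 * n i ^ γ)) * ∑ i, n i * ω i ^ 2 := by
      apply Finset.sum_sq_le_sum_mul_sum_of_sq_eq_mul
      · intro i _
        have := hω i
        have := hg i
        positivity
      · intro i _
        have := hn i
        positivity
      · intro i _
        have hw := hω i
        have hgi := hg i
        have h3i := h3 i
        rw [one_div_mul_eq_div, eq_div_iff (by positivity)]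
        linear_combination (ω i ^ 2) * h3i
    refine hcs.trans (mul_le_mul_of_nonneg_left ?_ ?_)
    · have : ∑ i, n i * ω i ^ 2 = N * ∑ i, (n i / N) * ω i ^ 2 := by
        rw [Finset.mul_sum]
        refine Finset.sum_congr rfl (fun i _ => ?_)
        field_simp
      rw [this]
      exact mul_le_mul_of_nonneg_left hc hN.le
    · refine Finset.sum_nonneg (fun i _ => ?_)
      have := hω i
      have := hg i
      positivity
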